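/- Let X and Y be real Banach spaces. Then 𝒯^cc(X ⊕_∞ Y) ≥ min{𝒯^cc(X), 𝒯^cc(Y)}, and if moreover 𝒯^cc(X ⊕_∞ Y) > 1, then 𝒯^cc(X ⊕_∞ Y) = min{𝒯^cc(X), 𝒯^cc(Y)}; here X ⊕_∞ Y is the ℓ_∞-sum of X and Y. -/

import Mathlib

open Metric Set

noncomputable section

variable (X : Type*) [NormedAddCommGroup X] [NormedSpace ℝ X]

/-- A subset `U` of `X` is weakly open if it is open in the weak topology of `X`. -/
def IsWeaklyOpen (U : Set X) : Prop := IsOpen (toWeakSpace ℝ X '' U)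

/-- The slice `S(B_X, f, α) = {x ∈ B_X : f x > 1 - α}` of the closed unit ball of `X`. -/
def sliceSet (f : X →L[ℝ] ℝ) (α : ℝ) : Set X :=
  {y ∈ closedBall (0 : X) 1 | 1 - α < f y}

/-- `S` is a slice of the closed unit ball of `X`, i.e. `S = S(B_X, f, α)` for some norm-one
functional `f` and some `α > 0`. -/
def IsSlice (S : Set X) : Prop :=
  ∃ f : X →L[ℝ] ℝ, ‖f‖ = 1 ∧ ∃ α > (0 : ℝ), S = sliceSet X f α

/-- The Daugavet index of thickness `𝒯ˢ(X)`: the infimum of all `r > 0` such that some slice of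
the closed unit ball is contained in a closed ball of radius `r` centered at a point of the unit
sphere. -/
def Ts : ℝ :=
  sInf {r : ℝ | 0 < r ∧ ∃ x : X, ‖x‖ = 1 ∧ ∃ S : Set X, IsSlice X S ∧ S ⊆ closedBall x r}

/-- `W` is a nonempty relatively weakly open subset of the closed unit ball of `X`. -/
def IsRelWeakOpen (W : Set X) : Prop :=
  W.Nonempty ∧ ∃ U : Set X, IsWeaklyOpen X U ∧ W = closedBall (0 : X) 1 ∩ U

/-- The Daugavet index of thickness `𝒯(X)`: the infimum of all `r > 0` such that some nonempty
relatively weakly open subset of the closed unit ball is contained in a closed ball of radius `r`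
centered at a point of the unit sphere. -/
def Tw : ℝ :=
  sInf {r : ℝ | 0 < r ∧ ∃ x : X, ‖x‖ = 1 ∧ ∃ W : Set X, IsRelWeakOpen X W ∧
    W ⊆ closedBall x r}

/-- The convex combination `∑ i, l i • W i` of the sets `W i` (the set of all sums
`∑ i, l i • w i` with `w i ∈ W i`). -/
def comboSet {n : ℕ} (l : Fin n → ℝ) (W : Fin n → Set X) : Set X :=
  {z : X | ∃ w : Fin n → X, (∀ i, w i ∈ W i) ∧ z = ∑ i, l i • w i}

/-- The Daugavet index of thickness `𝒯ᶜᶜ(X)`: the infimum of all `r > 0` such that some convex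
combination of nonempty relatively weakly open subsets of the closed unit ball is contained in a
closed ball of radius `r` centered at a point of the unit sphere. -/
def Tcc : ℝ :=
  sInf {r : ℝ | 0 < r ∧ ∃ x : X, ‖x‖ = 1 ∧ ∃ (n : ℕ) (l : Fin n → ℝ) (W : Fin n → Set X),
    (∀ i, 0 ≤ l i) ∧ (∑ i, l i) = 1 ∧ (∀ i, IsRelWeakOpen X (W i)) ∧
    comboSet X l W ⊆ closedBall x r}

/-- `X` has the Daugavet property: for every `x` in the unit sphere, every `ε > 0` and every
slice `S` of the closed unit ball there exists `y ∈ S` with `‖x - y‖ ≥ 2 - ε`. -/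
def DaugavetProperty : Prop :=
  ∀ x : X, ‖x‖ = 1 → ∀ ε > (0 : ℝ), ∀ S : Set X, IsSlice X S → ∃ y ∈ S, 2 - ε ≤ ‖x - y‖

/-! The unit ball of `X ⊕_∞ Y` is `B_X × B_Y`. Let `C` be a convex combination of nonempty
relatively weakly open subsets of this ball. Choosing a point in each of these sets and freezing its
`Y`-coordinate gives a convex combination in `B_X` contained in the projection of `C`. If `C` lies
within `r` of a unit vector `(x, y)`, this one lies within `r` of `x`; symmetrically for `y`, and
one of `x`, `y` has norm one.

Conversely, pulling back a convex combination in `B_X` along the projection leaves the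
`Y`-coordinate free in `B_Y`. If the original lies within `r` of `x`, then the pullback lies within
`max r 1` of `(x, 0)`, hence the threshold `1` in the upper bound. -/

section General

variable {E F : Type*} [NormedAddCommGroup E] [NormedSpace ℝ E]
  [NormedAddCommGroup F] [NormedSpace ℝ F]

lemma isWeaklyOpen_iff {U : Set E} :
    IsWeaklyOpen E U ↔ IsOpen ((toWeakSpace ℝ E).symm ⁻¹' U) := by
  rw [IsWeaklyOpen, LinearEquiv.image_eq_preimage_symm]

lemma IsWeaklyOpen.univ : IsWeaklyOpen E univ :=
  isWeaklyOpen_iff.2 isOpen_univ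

lemma IsWeaklyOpen.preimage {U : Set F} (hU : IsWeaklyOpen F U) (f : E →ᴬ[ℝ] F) :
    IsWeaklyOpen E (f ⁻¹' U) := by
  have hcont : Continuous fun a : WeakSpace ℝ E =>
      toWeakSpace ℝ F (f ((toWeakSpace ℝ E).symm a)) := by
    rw [f.decomp]
    exact (WeakSpace.map f.contLinear).continuous.add continuous_const
  exact isWeaklyOpen_iff.2 ((isWeaklyOpen_iff.1 hU).preimage hcont)

lemma isRelWeakOpen_closedBall : IsRelWeakOpen E (closedBall 0 1) :=
  ⟨nonempty_closedBall.2 zero_le_one, univ, .univ, (inter_univ _).symm⟩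

lemma IsRelWeakOpen.subset_closedBall {W : Set E} (hW : IsRelWeakOpen E W) :
    W ⊆ closedBall 0 1 := by
  obtain ⟨-, U, -, rfl⟩ := hW
  exact inter_subset_left

lemma IsRelWeakOpen.closedBall_inter_preimage {W : Set F} (hW : IsRelWeakOpen F W) {f : E →ᴬ[ℝ] F}
    (hf : MapsTo f (closedBall 0 1) (closedBall 0 1))
    (hne : (closedBall 0 1 ∩ f ⁻¹' W).Nonempty) :
    IsRelWeakOpen E (closedBall 0 1 ∩ f ⁻¹' W) := by
  obtain ⟨-, U, hU, rfl⟩ := hW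
  refine ⟨hne, f ⁻¹' U, hU.preimage f, ?_⟩
  rw [preimage_inter, ← inter_assoc, inter_eq_left.2 hf.subset_preimage]

/-- `C` is a convex combination of nonempty relatively weakly open subsets of the closed unit ball
of `E`, as in the definition of `𝒯ᶜᶜ(E)`. -/
def IsConvexComboRelWeakOpen (C : Set E) : Prop :=
  ∃ (n : ℕ) (l : Fin n → ℝ) (W : Fin n → Set E),
    (∀ i, 0 ≤ l i) ∧ ∑ i, l i = 1 ∧ (∀ i, IsRelWeakOpen E (W i)) ∧ C = comboSet E l W

lemma isConvexComboRelWeakOpen_closedBall :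
    IsConvexComboRelWeakOpen (closedBall (0 : E) 1) := by
  refine ⟨1, fun _ => 1, fun _ => closedBall 0 1, fun _ => zero_le_one, by simp,
    fun _ => isRelWeakOpen_closedBall, ?_⟩
  ext z
  simp only [comboSet, Fin.sum_univ_one, one_smul, Fin.forall_fin_one]
  exact ⟨fun hz => ⟨fun _ => z, hz, rfl⟩, fun ⟨_, hw, hz⟩ => hz ▸ hw⟩

namespace IsConvexComboRelWeakOpen

lemma subset_closedBall {C : Set E} (hC : IsConvexComboRelWeakOpen C) : C ⊆ closedBall 0 1 := by
  obtain ⟨n, l, W, hl, hsum, hW, rfl⟩ := hC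
  rintro _ ⟨w, hw, rfl⟩
  exact (convex_closedBall 0 1).sum_mem (fun i _ => hl i) hsum
    fun i _ => (hW i).subset_closedBall (hw i)

lemma exists_mapsTo_of_image_closedBall {C : Set F} (hC : IsConvexComboRelWeakOpen C)
    {f : E →L[ℝ] F} (hf : f '' closedBall 0 1 = closedBall 0 1) :
    ∃ D : Set E, IsConvexComboRelWeakOpen D ∧ MapsTo f D C := by
  obtain ⟨n, l, W, hl, hsum, hW, rfl⟩ := hC
  have hne (i : Fin n) : (closedBall 0 1 ∩ f ⁻¹' W i).Nonempty := by
    rw [← image_inter_nonempty_iff, hf, inter_eq_right.2 (hW i).subset_closedBall]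
    exact (hW i).1
  have hball : MapsTo f.toContinuousAffineMap (closedBall 0 1) (closedBall 0 1) :=
    mapsTo_iff_image_subset.2 hf.subset
  refine ⟨_, ⟨n, l, fun i => closedBall 0 1 ∩ f ⁻¹' W i, hl, hsum,
    fun i => (hW i).closedBall_inter_preimage hball (hne i), rfl⟩, ?_⟩
  rintro _ ⟨w, hw, rfl⟩
  exact ⟨fun i => f (w i), fun i => (hw i).2, by simp only [map_sum, map_smul]⟩

end IsConvexComboRelWeakOpen

lemma Tcc_le {C : Set E} (hC : IsConvexComboRelWeakOpen C) {x : E} (hx : ‖x‖ = 1) {r : ℝ}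
    (hr : 0 < r) (hCr : C ⊆ closedBall x r) : Tcc E ≤ r := by
  obtain ⟨n, l, W, hl, hsum, hW, rfl⟩ := hC
  exact csInf_le ⟨0, fun _ hs => hs.1.le⟩ ⟨hr, x, hx, n, l, W, hl, hsum, hW, hCr⟩

lemma le_Tcc [Nontrivial E] {c : ℝ}
    (h : ∀ (C : Set E) (x : E) (r : ℝ), IsConvexComboRelWeakOpen C → ‖x‖ = 1 → 0 < r →
      C ⊆ closedBall x r → c ≤ r) :
    c ≤ Tcc E := by
  refine le_csInf ?_ fun r ⟨hr, x, hx, n, l, W, hl, hsum, hW, hCr⟩ =>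
    h _ x r ⟨n, l, W, hl, hsum, hW, rfl⟩ hx hr hCr
  obtain ⟨x, hx⟩ := exists_norm_eq E zero_le_one
  obtain ⟨n, l, W, hl, hsum, hW, hball⟩ := isConvexComboRelWeakOpen_closedBall (E := E)
  refine ⟨2, two_pos, x, hx, n, l, W, hl, hsum, hW, hball ▸ closedBall_subset_closedBall' ?_⟩
  rw [dist_zero_left, hx, one_add_one_eq_two]

end General

/-- `E` is an M-summand of `Z`, embedded by `L` with M-projection `P`: the space `Z` is the
`ℓ_∞`-sum of `L E` and the kernel of `P`. The pair `(L, P)` replaces the idempotent `L ∘ P` of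
`IsMprojection` so that both factors of `X ⊕_∞ Y` are M-summands without passing to subspaces. -/
structure IsMSummand {E Z : Type*} [NormedAddCommGroup E] [NormedSpace ℝ E]
    [NormedAddCommGroup Z] [NormedSpace ℝ Z] (L : E →L[ℝ] Z) (P : Z →L[ℝ] E) : Prop where
  proj_incl : ∀ a, P (L a) = a
  norm_eq_max : ∀ z, ‖z‖ = max ‖P z‖ ‖z - L (P z)‖

namespace IsMSummand

variable {E Z : Type*} [NormedAddCommGroup E] [NormedSpace ℝ E] [NormedAddCommGroup Z]
  [NormedSpace ℝ Z] {L : E →L[ℝ] Z} {P : Z →L[ℝ] E}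

lemma proj_sub_incl_proj (h : IsMSummand L P) (z : Z) : P (z - L (P z)) = 0 := by
  rw [map_sub, h.proj_incl, sub_self]

lemma norm_incl (h : IsMSummand L P) (a : E) : ‖L a‖ = ‖a‖ := by
  simp [h.norm_eq_max (L a), h.proj_incl]

lemma norm_proj_le (h : IsMSummand L P) (z : Z) : ‖P z‖ ≤ ‖z‖ :=
  (le_max_left _ _).trans_eq (h.norm_eq_max z).symm

lemma norm_sub_incl_proj_le (h : IsMSummand L P) (z : Z) : ‖z - L (P z)‖ ≤ ‖z‖ :=
  (le_max_right _ _).trans_eq (h.norm_eq_max z).symm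

lemma norm_incl_add (h : IsMSummand L P) (a : E) {y : Z} (hy : P y = 0) :
    ‖L a + y‖ = max ‖a‖ ‖y‖ := by
  simp [h.norm_eq_max (L a + y), h.proj_incl, hy]

lemma image_closedBall (h : IsMSummand L P) :
    P '' closedBall 0 1 = closedBall 0 1 := by
  refine Subset.antisymm ?_ fun a ha => ⟨L a, ?_, h.proj_incl a⟩
  · rintro _ ⟨z, hz, rfl⟩
    rw [mem_closedBall_zero_iff] at hz ⊢
    exact (h.norm_proj_le z).trans hz
  · rwa [mem_closedBall_zero_iff, h.norm_incl, ← mem_closedBall_zero_iff]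

lemma exists_affine_section (h : IsMSummand L P) {w : Z} (hw : w ∈ closedBall 0 1) :
    ∃ f : E →ᴬ[ℝ] Z, MapsTo f (closedBall 0 1) (closedBall 0 1) ∧
      Function.RightInverse f P ∧ f (P w) = w := by
  refine ⟨L.toContinuousAffineMap + .const ℝ E (w - L (P w)), fun a ha => ?_, fun a => ?_, ?_⟩
  · rw [mem_closedBall_zero_iff] at ha hw ⊢
    exact (h.norm_incl_add a (h.proj_sub_incl_proj w)).trans_le
      (max_le ha ((h.norm_sub_incl_proj_le w).trans hw))
  · simp [h.proj_incl]
  · simp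

lemma exists_subset_image (h : IsMSummand L P) {C : Set Z} (hC : IsConvexComboRelWeakOpen C) :
    ∃ D : Set E, IsConvexComboRelWeakOpen D ∧ D ⊆ P '' C := by
  obtain ⟨n, l, W, hl, hsum, hW, rfl⟩ := hC
  choose w hw using fun i => (hW i).1
  have hw_ball (i : Fin n) : w i ∈ closedBall 0 1 := (hW i).subset_closedBall (hw i)
  choose f hf_ball hPf hfw using fun i => h.exists_affine_section (hw_ball i)
  have hPw (i : Fin n) : P (w i) ∈ closedBall 0 1 ∩ f i ⁻¹' W i := by
    refine ⟨h.image_closedBall.subset (mem_image_of_mem P (hw_ball i)), ?_⟩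
    rw [mem_preimage, hfw]
    exact hw i
  refine ⟨_, ⟨n, l, fun i => closedBall 0 1 ∩ f i ⁻¹' W i, hl, hsum,
    fun i => (hW i).closedBall_inter_preimage (hf_ball i) ⟨_, hPw i⟩, rfl⟩, ?_⟩
  rintro _ ⟨a, ha, rfl⟩
  refine ⟨_, ⟨fun i => f i (a i), fun i => (ha i).2, rfl⟩, ?_⟩
  simp only [map_sum, map_smul, hPf _ _]

lemma Tcc_le_of_norm_proj_eq_one (h : IsMSummand L P) {C : Set Z}
    (hC : IsConvexComboRelWeakOpen C) {z : Z} (hz : ‖P z‖ = 1) {r : ℝ} (hr : 0 < r)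
    (hCr : C ⊆ closedBall z r) : Tcc E ≤ r := by
  obtain ⟨D, hD, hDC⟩ := h.exists_subset_image hC
  refine Tcc_le hD hz hr (hDC.trans ?_)
  rintro _ ⟨v, hv, rfl⟩
  rw [mem_closedBall_iff_norm, ← map_sub]
  exact (h.norm_proj_le _).trans (mem_closedBall_iff_norm.1 (hCr hv))

lemma closedBall_inter_preimage_subset (h : IsMSummand L P) (x : E) (r : ℝ) :
    closedBall 0 1 ∩ P ⁻¹' closedBall x r ⊆ closedBall (L x) (max r 1) := by
  rintro v ⟨hv, hPv⟩
  rw [mem_closedBall_zero_iff] at hv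
  rw [mem_preimage, mem_closedBall_iff_norm] at hPv
  rw [mem_closedBall_iff_norm]
  calc ‖v - L x‖ = ‖L (P v - x) + (v - L (P v))‖ := by rw [map_sub]; congr 1; abel
    _ = max ‖P v - x‖ ‖v - L (P v)‖ := h.norm_incl_add _ (h.proj_sub_incl_proj v)
    _ ≤ max r 1 := max_le_max hPv ((h.norm_sub_incl_proj_le v).trans hv)

lemma Tcc_le_max_one [Nontrivial E] (h : IsMSummand L P) : Tcc Z ≤ max (Tcc E) 1 := by
  refine le_max_iff.2 (or_iff_not_imp_right.2 fun hZ => le_Tcc fun C x r hC hx hr hCr => ?_)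
  obtain ⟨D, hD, hDC⟩ := hC.exists_mapsTo_of_image_closedBall h.image_closedBall
  have hDr : D ⊆ closedBall (L x) (max r 1) := fun v hv =>
    h.closedBall_inter_preimage_subset x r ⟨hD.subset_closedBall hv, hCr (hDC hv)⟩
  have hTcc : Tcc Z ≤ max r 1 := Tcc_le hD (by rw [h.norm_incl, hx]) (lt_max_of_lt_left hr) hDr
  exact (le_max_iff.1 hTcc).resolve_right hZ

end IsMSummand

section LinftySum

variable {E F : Type*} [NormedAddCommGroup E] [NormedSpace ℝ E]
  [NormedAddCommGroup F] [NormedSpace ℝ F]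

lemma isMSummand_fst :
    IsMSummand ((WithLp.prodContinuousLinearEquiv ⊤ ℝ E F).symm.toContinuousLinearMap.comp
      (.inl ℝ E F)) (WithLp.fstL ⊤ ℝ E F) where
  proj_incl _ := rfl
  norm_eq_max z := by simp [WithLp.prod_norm_eq_sup]

lemma isMSummand_snd :
    IsMSummand ((WithLp.prodContinuousLinearEquiv ⊤ ℝ E F).symm.toContinuousLinearMap.comp
      (.inr ℝ E F)) (WithLp.sndL ⊤ ℝ E F) where
  proj_incl _ := rfl
  norm_eq_max z := by simp [WithLp.prod_norm_eq_sup, max_comm]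

lemma min_Tcc_le_Tcc_withLp_top_prod [Nontrivial E] :
    min (Tcc E) (Tcc F) ≤ Tcc (WithLp ⊤ (E × F)) := by
  refine le_Tcc fun C z r hC hz hr hCr => ?_
  rcases max_choice ‖z.fst‖ ‖z.snd‖ with hmax | hmax <;>
    rw [← WithLp.prod_norm_eq_sup, hz] at hmax
  · exact min_le_of_left_le (isMSummand_fst.Tcc_le_of_norm_proj_eq_one hC hmax.symm hr hCr)
  · exact min_le_of_right_le (isMSummand_snd.Tcc_le_of_norm_proj_eq_one hC hmax.symm hr hCr)

lemma Tcc_withLp_top_prod_le [Nontrivial E] [Nontrivial F] :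
    Tcc (WithLp ⊤ (E × F)) ≤ max (min (Tcc E) (Tcc F)) 1 := by
  rw [max_min_distrib_right]
  exact le_min isMSummand_fst.Tcc_le_max_one isMSummand_snd.Tcc_le_max_one

end LinftySum

theorem stmt_15_general (X Y : Type*) [NormedAddCommGroup X] [NormedSpace ℝ X] [Nontrivial X]
    [NormedAddCommGroup Y] [NormedSpace ℝ Y] [Nontrivial Y] :
    min (Tcc X) (Tcc Y) ≤ Tcc (WithLp ⊤ (X × Y)) ∧
      (1 < Tcc (WithLp ⊤ (X × Y)) → Tcc (WithLp ⊤ (X × Y)) = min (Tcc X) (Tcc Y)) := by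
  refine ⟨min_Tcc_le_Tcc_withLp_top_prod, fun hone => ?_⟩
  have hle : Tcc (WithLp ⊤ (X × Y)) ≤ min (Tcc X) (Tcc Y) :=
    (le_max_iff.1 Tcc_withLp_top_prod_le).resolve_right hone.not_ge
  exact hle.antisymm min_Tcc_le_Tcc_withLp_top_prod

theorem stmt_15 (X Y : Type*) [NormedAddCommGroup X] [NormedSpace ℝ X]
    [CompleteSpace X] [Nontrivial X] [NormedAddCommGroup Y] [NormedSpace ℝ Y]
    [CompleteSpace Y] [Nontrivial Y] :
    min (Tcc X) (Tcc Y) ≤ Tcc (WithLp ⊤ (X × Y)) ∧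
      (1 < Tcc (WithLp ⊤ (X × Y)) → Tcc (WithLp ⊤ (X × Y)) = min (Tcc X) (Tcc Y)) := by
  exact stmt_15_general X Y
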